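/- arXiv:1411.7363 — 2 statements merged into one kernel-verified Lean document; each statement's English description precedes it below -/
import Mathlib

section
/- Every connected component of the complement ℝⁿ \ 𝒯(A,c) of a combinatorial tropical hypersurface is a convex set (i.e., the complement of 𝒯(A,c) is 0-convex). -/
open RealInnerProductSpace

/-- Every connected component of the complement of a combinatorial
tropical hypersurface `𝒯(A,c)` in `ℝⁿ` is convex (`0`-convexity of the complement).
Here `𝒯(A,c)` is the set of points `x` at which the minimum
`min_{a ∈ A} (c a + ⟪a, x⟫)` is attained by at least two distinct elements of `A`. -/
theorem complement_of_tropical_hypersurface_is_zero_convex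
    (n : ℕ) (hn : 1 ≤ n)
    (A : Finset (EuclideanSpace ℝ (Fin n))) (hA : A.Nonempty)
    (c : EuclideanSpace ℝ (Fin n) → ℝ)
    (𝒯 : Set (EuclideanSpace ℝ (Fin n)))
    (h𝒯 : 𝒯 = {x | ∃ a ∈ A, ∃ b ∈ A, a ≠ b ∧
        (∀ e ∈ A, c a + ⟪a, x⟫ ≤ c e + ⟪e, x⟫) ∧
        (∀ e ∈ A, c b + ⟪b, x⟫ ≤ c e + ⟪e, x⟫)})
    (x : EuclideanSpace ℝ (Fin n)) (hx : x ∈ 𝒯ᶜ) :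
    Convex ℝ (connectedComponentIn 𝒯ᶜ x) := by
  subst h𝒯
  set T : Set (EuclideanSpace ℝ (Fin n)) := {x | ∃ a ∈ A, ∃ b ∈ A, a ≠ b ∧
        (∀ e ∈ A, c a + ⟪a, x⟫ ≤ c e + ⟪e, x⟫) ∧
        (∀ e ∈ A, c b + ⟪b, x⟫ ≤ c e + ⟪e, x⟫)} with hT
  have hmin : ∀ y, ∃ a ∈ A, ∀ e ∈ A, c a + ⟪a, y⟫ ≤ c e + ⟪e, y⟫ := fun y =>
    A.exists_min_image (fun a => c a + ⟪a, y⟫) hA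
  obtain ⟨a, ha, hax⟩ := hmin x
  set U : Set (EuclideanSpace ℝ (Fin n)) :=
    ⋂ e ∈ A.erase a, {y | c a + ⟪a, y⟫ < c e + ⟪e, y⟫} with hU
  set V : Set (EuclideanSpace ℝ (Fin n)) :=
    ⋃ e ∈ A.erase a, {y | c e + ⟪e, y⟫ < c a + ⟪a, y⟫} with hV
  have hUm : ∀ y, y ∈ U ↔ ∀ e ∈ A, e ≠ a → c a + ⟪a, y⟫ < c e + ⟪e, y⟫ := by
    intro y
    simp only [hU, Set.mem_iInter, Finset.mem_erase, Set.mem_setOf_eq]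
    exact ⟨fun h e he hne => h e ⟨hne, he⟩, fun h e he => h e he.2 he.1⟩
  have hVm : ∀ y, y ∈ V ↔ ∃ e ∈ A, e ≠ a ∧ c e + ⟪e, y⟫ < c a + ⟪a, y⟫ := by
    intro y
    simp only [hV, Set.mem_iUnion, Finset.mem_erase, Set.mem_setOf_eq, exists_prop]
    exact ⟨fun ⟨e, h, h'⟩ => ⟨e, h.2, h.1, h'⟩, fun ⟨e, h, h', h2⟩ => ⟨e, ⟨h', h⟩, h2⟩⟩
  have hUo : IsOpen U := by
    refine isOpen_biInter_finset fun e _ => ?_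
    exact isOpen_lt (by fun_prop) (by fun_prop)
  have hVo : IsOpen V := by
    refine isOpen_biUnion fun e _ => ?_
    exact isOpen_lt (by fun_prop) (by fun_prop)
  have hdisj : Disjoint U V := by
    rw [Set.disjoint_left]
    intro y h1 h2
    obtain ⟨e, he, hne, hlt⟩ := (hVm y).1 h2
    exact lt_asymm hlt ((hUm y).1 h1 e he hne)
  have hkey : ∀ y ∈ Tᶜ, (∀ e ∈ A, c a + ⟪a, y⟫ ≤ c e + ⟪e, y⟫) → y ∈ U := by
    intro y hy hay
    rw [hUm]
    intro e he hne
    by_contra hcon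
    exact hy ⟨a, ha, e, he, hne.symm, hay, fun f hf => (not_lt.1 hcon).trans (hay f hf)⟩
  have hsub : Tᶜ ⊆ U ∪ V := by
    intro y hy
    by_cases h : ∀ e ∈ A, c a + ⟪a, y⟫ ≤ c e + ⟪e, y⟫
    · exact Or.inl (hkey y hy h)
    · push Not at h
      obtain ⟨e, he, hlt⟩ := h
      refine Or.inr ((hVm y).2 ⟨e, he, ?_, hlt⟩)
      rintro rfl
      exact lt_irrefl _ hlt
  have hxU : x ∈ U := hkey x hx hax
  have hUT : U ⊆ Tᶜ := by
    rintro y hy ⟨p, hp, q, hq, hpq, h1, h2⟩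
    rw [hUm] at hy
    have hp' : p = a := by
      by_contra h
      exact absurd (h1 a ha) (not_le.2 (hy p hp h))
    have hq' : q = a := by
      by_contra h
      exact absurd (h2 a ha) (not_le.2 (hy q hq h))
    exact hpq (hp'.trans hq'.symm)
  have hUc : Convex ℝ U := by
    refine convex_iInter₂ fun e _ => ?_
    have : {y : EuclideanSpace ℝ (Fin n) | c a + ⟪a, y⟫ < c e + ⟪e, y⟫}
        = {y | (innerₛₗ ℝ (a - e)) y < c e - c a} := by
      ext y
      simp only [Set.mem_setOf_eq, innerₛₗ_apply_apply, inner_sub_left]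
      constructor <;> intro h <;> linarith
    rw [this]
    exact convex_halfSpace_lt (LinearMap.isLinear _) _
  have heq : connectedComponentIn Tᶜ x = U := by
    apply Set.Subset.antisymm
    · exact isPreconnected_connectedComponentIn.subset_left_of_subset_union hUo hVo hdisj
        ((connectedComponentIn_subset _ _).trans hsub)
        ⟨x, mem_connectedComponentIn hx, hxU⟩
    · exact hUc.isPreconnected.subset_connectedComponentIn hxU hUT
  rw [heq]
  exact hUc
end

section
/- Every connected component of a weakly balanced graph 𝒞 = ⋃_i E_i in ℝⁿ is an unbounded subset of ℝⁿ. -/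
open RealInnerProductSpace

/-- An edge in `ℝⁿ`: either a closed segment `[a, b]` with `a ≠ b`, or a closed ray
`{a + t • v : t ≥ 0}` with `v ≠ 0`. -/
def IsEdge {n : ℕ} (E : Set (EuclideanSpace ℝ (Fin n))) : Prop :=
  (∃ a b : EuclideanSpace ℝ (Fin n), a ≠ b ∧ E = segment ℝ a b) ∨
  (∃ a v : EuclideanSpace ℝ (Fin n), v ≠ 0 ∧ E = {x | ∃ t : ℝ, 0 ≤ t ∧ x = a + t • v})

/-- `p` is an endpoint of the edge `E`: an endpoint of the segment, or the
vertex of the ray. -/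
def IsEndpointOf {n : ℕ} (E : Set (EuclideanSpace ℝ (Fin n)))
    (p : EuclideanSpace ℝ (Fin n)) : Prop :=
  (∃ a b : EuclideanSpace ℝ (Fin n), a ≠ b ∧ E = segment ℝ a b ∧ (p = a ∨ p = b)) ∨
  (∃ a v : EuclideanSpace ℝ (Fin n), v ≠ 0 ∧
    E = {x | ∃ t : ℝ, 0 ≤ t ∧ x = a + t • v} ∧ p = a)

/-- The nonzero vector `u` points along the edge `E` away from the point `p`:
`p + s • u ∈ E` for all sufficiently small `s > 0`. -/
def PointsAwayFrom {n : ℕ} (E : Set (EuclideanSpace ℝ (Fin n)))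
    (p u : EuclideanSpace ℝ (Fin n)) : Prop :=
  u ≠ 0 ∧ ∃ s₀ : ℝ, 0 < s₀ ∧ ∀ s : ℝ, 0 < s → s < s₀ → p + s • u ∈ E

/-- A weakly balanced graph in `ℝⁿ`: a locally finite family of edges (segments or rays),
any two distinct edges meeting at most in a single point that is an endpoint of both,
such that at every point `p` of the union `𝒞 = ⋃ i, E i` and for every `w ∈ ℝⁿ`, either
`⟪w, u⟫ = 0` for every edge incident to `p` and every vector `u` pointing along it away
from `p`, or there are two edges incident to `p` and vectors pointing along them away
from `p` whose pairings with `w` have strictly opposite signs. -/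
def IsWeaklyBalancedGraph {n : ℕ} {ι : Type*}
    (E : ι → Set (EuclideanSpace ℝ (Fin n))) : Prop :=
  (∀ i, IsEdge (E i)) ∧
  LocallyFinite E ∧
  (∀ i j, i ≠ j → ∀ p ∈ E i ∩ E j,
    E i ∩ E j = {p} ∧ IsEndpointOf (E i) p ∧ IsEndpointOf (E j) p) ∧
  (∀ p ∈ ⋃ i, E i, ∀ w : EuclideanSpace ℝ (Fin n),
    (∀ i, p ∈ E i → ∀ u, PointsAwayFrom (E i) p u → ⟪w, u⟫ = 0) ∨
    (∃ i j, p ∈ E i ∧ p ∈ E j ∧ ∃ ui uj : EuclideanSpace ℝ (Fin n),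
      PointsAwayFrom (E i) p ui ∧ PointsAwayFrom (E j) p uj ∧
      ⟪w, ui⟫ < 0 ∧ 0 < ⟪w, uj⟫))


theorem edge_props {n : ℕ} {E : Set (EuclideanSpace ℝ (Fin n))} (h : IsEdge E) :
    IsClosed E ∧ Convex ℝ E ∧ E.Nontrivial := by
  rcases h with ⟨a, b, hab, rfl⟩ | ⟨a, v, hv, rfl⟩
  · refine ⟨?_, convex_segment a b, a, left_mem_segment ℝ a b, b, right_mem_segment ℝ a b, hab⟩
    rw [← convexHull_pair]
    exact ((Set.toFinite {a, b}).isCompact_convexHull ℝ).isClosed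
  · refine ⟨?_, ?_, a, ⟨0, le_rfl, by simp⟩, a + v, ⟨1, zero_le_one, by simp⟩, by simpa using hv⟩
    · have h1 : Topology.IsClosedEmbedding (fun t : ℝ => a + t • v) :=
        (Homeomorph.addLeft a).isClosedEmbedding.comp (isClosedEmbedding_smul_left hv)
      have h2 := h1.isClosedMap _ (isClosed_Ici (a := (0 : ℝ)))
      convert h2 using 1
      ext x
      simp [eq_comm]
    · rintro x ⟨t, ht, rfl⟩ y ⟨s, hs, rfl⟩ c d hc hd hcd
      refine ⟨c * t + d * s, by positivity, ?_⟩
      have : a = (c + d) • a := by rw [hcd, one_smul]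
      conv_rhs => rw [this]
      module

/-- Every connected component of a weakly balanced graph `𝒞 = ⋃ i, E i`
in `ℝⁿ` is an unbounded subset of `ℝⁿ`. -/
theorem weakly_balanced_graph_components_unbounded
    (n : ℕ) {ι : Type*} (E : ι → Set (EuclideanSpace ℝ (Fin n)))
    (hE : IsWeaklyBalancedGraph E)
    (p : EuclideanSpace ℝ (Fin n)) (hp : p ∈ ⋃ i, E i) :
    ¬ Bornology.IsBounded (connectedComponentIn (⋃ i, E i) p) := by
  obtain ⟨hedge, hlf, -, hbal⟩ := hE
  intro hb
  set C := ⋃ i, E i with hC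
  set K := connectedComponentIn C p with hK
  have hCc : IsClosed C := hlf.isClosed_iUnion fun i => (edge_props (hedge i)).1
  have hpK : p ∈ K := mem_connectedComponentIn hp
  have hKC : K ⊆ C := connectedComponentIn_subset C p
  have hKc : IsClosed K := by
    refine isClosed_of_closure_subset ?_
    exact (isPreconnected_connectedComponentIn.closure).subset_connectedComponentIn
      (subset_closure hpK) (closure_minimal hKC hCc)
  have hcomp : IsCompact K := Metric.isCompact_of_isClosed_isBounded hKc hb
  obtain ⟨q, hqK, hq⟩ := hcomp.exists_isMaxOn ⟨p, hpK⟩ continuous_norm.continuousOn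
  have hsub : ∀ i, q ∈ E i → E i ⊆ K := by
    intro i hi
    have h := (edge_props (hedge i)).2.1.isPreconnected.subset_connectedComponentIn hi
      (Set.subset_iUnion E i)
    rwa [← connectedComponentIn_eq hqK] at h
  have key : ∀ i, q ∈ E i → ∀ u, PointsAwayFrom (E i) q u → ⟪q, u⟫ < 0 := by
    rintro i hi u ⟨hu, s, hs, hmem⟩
    by_contra! hge
    have h1 := hq (hsub i hi (hmem (s / 2) (by linarith) (by linarith)))
    have h1 : ‖q + (s / 2) • u‖ ≤ ‖q‖ := h1
    have h2 := norm_add_sq_real q ((s / 2) • u)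
    rw [inner_smul_right] at h2
    have h3 : 0 < ‖(s / 2) • u‖ := norm_pos_iff.2 (smul_ne_zero (by linarith) hu)
    have h4 : 0 ≤ s / 2 * ⟪q, u⟫ := by positivity
    have h5 := pow_le_pow_left₀ (norm_nonneg _) h1 2
    have h6 := pow_pos h3 2
    linarith
  rcases hbal q (hKC hqK) q with h | ⟨i, j, -, hj, ui, uj, -, hpj, -, hpos⟩
  · obtain ⟨i, hi⟩ := Set.mem_iUnion.1 (hKC hqK)
    obtain ⟨-, hconv, hnt⟩ := edge_props (hedge i)
    obtain ⟨y, hy, hne⟩ := hnt.exists_ne q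
    have hpa : PointsAwayFrom (E i) q (y - q) :=
      ⟨sub_ne_zero.2 hne, 1, one_pos, fun s h0 h1 =>
        hconv.add_smul_sub_mem hi hy ⟨h0.le, h1.le⟩⟩
    have := key i hi _ hpa
    rw [h i hi _ hpa] at this
    exact lt_irrefl _ this
  · exact lt_asymm hpos (key j hj uj hpj)
end
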